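/- Let A be a Metzler matrix (all off-diagonal entries nonnegative) partitioned in blocks of compatible dimensions as A = [A₁₁, A₁₂; A₂₁, A₂₂] with A₁₁ and A₂₂ square. Then the following are equivalent: (i) A is Hurwitz; (ii) A₁₁ is an invertible Hurwitz Metzler matrix and its Schur complement A/A₁₁ := A₂₂ − A₂₁·A₁₁⁻¹·A₁₂ is a Hurwitz Metzler matrix; (iii) A₂₂ is an invertible Hurwitz Metzler matrix and its Schur complement A/A₂₂ := A₁₁ − A₁₂·A₂₂⁻¹·A₂₁ is a Hurwitz Metzler matrix. -/

import Mathlib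

open Matrix

/-- A real square matrix is Hurwitz if all its (complex) eigenvalues have
strictly negative real part. -/
def IsHurwitz {n : Type*} [Fintype n] [DecidableEq n] (M : Matrix n n ℝ) : Prop :=
  ∀ μ ∈ spectrum ℂ (M.map (Complex.ofReal)), μ.re < 0

/-- A real square matrix is Metzler if all its off-diagonal entries are
nonnegative. -/
def IsMetzler {n : Type*} [DecidableEq n] (M : Matrix n n ℝ) : Prop :=
  ∀ i j, i ≠ j → 0 ≤ M i j

/-- Positive vector certificate. -/
def HasCert {n : Type*} [Fintype n] (M : Matrix n n ℝ) : Prop :=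
  ∃ v : n → ℝ, (∀ i, 0 < v i) ∧ ∀ i, (M *ᵥ v) i < 0

lemma metzler_row_nonneg {n : Type*} [Fintype n] [DecidableEq n] {M : Matrix n n ℝ}
    (hM : IsMetzler M) (x : n → ℝ) (hx : ∀ j, 0 ≤ x j) (i : n) (hi : x i = 0) :
    0 ≤ (M *ᵥ x) i := by
  unfold Matrix.mulVec dotProduct
  refine Finset.sum_nonneg fun j _ => ?_
  by_cases h : i = j
  · subst h; simp [hi]
  · exact mul_nonneg (hM i j h) (hx j)

lemma cert_nonneg {n : Type*} [Fintype n] [DecidableEq n] {M : Matrix n n ℝ}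
    (hM : IsMetzler M) (hc : HasCert M) (x : n → ℝ) (hx : ∀ i, (M *ᵥ x) i ≤ 0) (k : n) :
    0 ≤ x k := by
  obtain ⟨v, hv, hMv⟩ := hc
  haveI : Nonempty n := ⟨k⟩
  obtain ⟨i, hi⟩ := Finite.exists_min (fun j => x j / v j)
  set m := x i / v i with hm
  have hle : ∀ j, 0 ≤ (x - m • v) j := by
    intro j
    have := (le_div_iff₀ (hv j)).1 (hi j)
    simp only [Pi.sub_apply, Pi.smul_apply, smul_eq_mul]; linarith
  have hz : (x - m • v) i = 0 := by
    have := (hv i).ne'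
    simp only [Pi.sub_apply, Pi.smul_apply, smul_eq_mul, hm]; field_simp; ring
  have h0 := metzler_row_nonneg hM _ hle i hz
  rw [Matrix.mulVec_sub, Matrix.mulVec_smul] at h0
  simp only [Pi.sub_apply, Pi.smul_apply, smul_eq_mul] at h0
  have hm0 : 0 ≤ m := by
    by_contra hneg
    push Not at hneg
    have := mul_pos_of_neg_of_neg hneg (hMv i)
    have := hx i
    linarith
  have := hle k
  simp only [Pi.sub_apply, Pi.smul_apply, smul_eq_mul] at this
  have := mul_nonneg hm0 (hv k).le
  linarith

lemma cert_isUnit {n : Type*} [Fintype n] [DecidableEq n] {M : Matrix n n ℝ}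
    (hM : IsMetzler M) (hc : HasCert M) : IsUnit M.det := by
  rw [isUnit_iff_ne_zero]
  intro h
  obtain ⟨x, hx, hMx⟩ := Matrix.exists_mulVec_eq_zero_iff.2 h
  apply hx
  funext k
  have h1 := cert_nonneg hM hc x (by simp [hMx]) k
  have h2 := cert_nonneg hM hc (-x) (by simp [Matrix.mulVec_neg, hMx]) k
  simp only [Pi.neg_apply] at h2
  simp only [Pi.zero_apply]
  linarith

lemma cert_inv {n : Type*} [Fintype n] [DecidableEq n] {M : Matrix n n ℝ}
    (hM : IsMetzler M) (hc : HasCert M) (i j : n) : M⁻¹ i j ≤ 0 := by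
  have hu := cert_isUnit hM hc
  have := cert_nonneg hM hc (-(M⁻¹ *ᵥ Pi.single j 1)) (by
    intro i
    rw [Matrix.mulVec_neg, Matrix.mulVec_mulVec, Matrix.mul_nonsing_inv _ hu, Matrix.one_mulVec]
    simp only [Pi.neg_apply, Left.neg_nonpos_iff]
    by_cases h : i = j
    · subst h; simp
    · simp [Pi.single_apply, h]) i
  simpa using this

lemma cert_hurwitz {n : Type*} [Fintype n] [DecidableEq n] {M : Matrix n n ℝ}
    (hM : IsMetzler M) (hc : HasCert M) : IsHurwitz M := by
  obtain ⟨v, hv, hMv⟩ := hc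
  intro μ hμ
  rw [spectrum.mem_iff, Matrix.isUnit_iff_isUnit_det, isUnit_iff_ne_zero, not_not] at hμ
  obtain ⟨x, hx, hMx⟩ := Matrix.exists_mulVec_eq_zero_iff.2 hμ
  obtain ⟨k, hk⟩ := Function.ne_iff.1 hx
  haveI : Nonempty n := ⟨k⟩
  obtain ⟨i, hi⟩ := Finite.exists_max (fun j => ‖x j‖ / v j)
  set m := ‖x i‖ / v i with hm
  have hmpos : 0 < m := lt_of_lt_of_le (div_pos (norm_pos_iff.2 hk) (hv k)) (hi k)
  have hxi : ‖x i‖ = m * v i := by rw [hm, div_mul_cancel₀ _ (hv i).ne']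
  have hle : ∀ j, ‖x j‖ ≤ m * v j := fun j => (div_le_iff₀ (hv j)).1 (hi j)
  have he : μ * x i = ∑ j, (M i j : ℂ) * x j := by
    have h := congrFun hMx i
    rw [Matrix.sub_mulVec, Algebra.algebraMap_eq_smul_one, Matrix.smul_mulVec,
      Matrix.one_mulVec] at h
    simp only [Pi.sub_apply, Pi.smul_apply, smul_eq_mul, Pi.zero_apply, sub_eq_zero] at h
    rw [h]; simp [Matrix.mulVec, dotProduct]
  have he2 : (μ - M i i) * x i = ∑ j ∈ Finset.univ.erase i, (M i j : ℂ) * x j := by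
    rw [← Finset.add_sum_erase _ _ (Finset.mem_univ i)] at he
    rw [sub_mul, he]; ring
  have h1 : ‖μ - M i i‖ * ‖x i‖ ≤ ∑ j ∈ Finset.univ.erase i, M i j * (m * v j) := by
    rw [← norm_mul, he2]
    refine (norm_sum_le _ _).trans (Finset.sum_le_sum fun j hj => ?_)
    have h0 : 0 ≤ M i j := hM i j (Finset.ne_of_mem_erase hj).symm
    rw [norm_mul, Complex.norm_real, Real.norm_of_nonneg h0]
    exact mul_le_mul_of_nonneg_left (hle j) h0
  have h2 : (M *ᵥ v) i = M i i * v i + ∑ j ∈ Finset.univ.erase i, M i j * v j := by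
    rw [Finset.add_sum_erase _ (fun j => M i j * v j) (Finset.mem_univ i)]; rfl
  have h3 : ∑ j ∈ Finset.univ.erase i, M i j * (m * v j)
      = m * ∑ j ∈ Finset.univ.erase i, M i j * v j := by
    rw [Finset.mul_sum]; exact Finset.sum_congr rfl fun j _ => by ring
  have h4 : (‖μ - M i i‖ + M i i) * (m * v i) < 0 := by
    have := mul_neg_of_pos_of_neg hmpos (hMv i)
    rw [h2] at this
    rw [h3, hxi] at h1
    linarith
  have h5 : ‖μ - M i i‖ + M i i < 0 := by
    by_contra hcon
    push Not at hcon
    have := mul_nonneg hcon (mul_pos hmpos (hv i)).le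
    linarith
  have h6 := Complex.re_le_norm (μ - M i i)
  simp only [Complex.sub_re, Complex.ofReal_re] at h6
  linarith

lemma sub_smul_mulVec_apply {n : Type*} [Fintype n] [DecidableEq n] (M : Matrix n n ℝ)
    (t : ℝ) (v : n → ℝ) (i : n) :
    ((M - t • (1 : Matrix n n ℝ)) *ᵥ v) i = (M *ᵥ v) i - t * v i := by
  rw [Matrix.sub_mulVec, Matrix.smul_mulVec, Matrix.one_mulVec]; rfl

lemma metzler_shift {n : Type*} [DecidableEq n] {M : Matrix n n ℝ}
    (hM : IsMetzler M) (t : ℝ) : IsMetzler (M - t • (1 : Matrix n n ℝ)) := by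
  intro i j h
  simpa [Matrix.one_apply, h] using hM i j h

lemma hurwitz_det {n : Type*} [Fintype n] [DecidableEq n] {M : Matrix n n ℝ}
    (hH : IsHurwitz M) (t : ℝ) (ht : 0 ≤ t) : (M - t • (1 : Matrix n n ℝ)).det ≠ 0 := by
  intro h
  have hs : (t : ℂ) ∈ spectrum ℂ (M.map Complex.ofReal) := by
    rw [spectrum.mem_iff, ← IsUnit.neg_iff, neg_sub, Matrix.isUnit_iff_isUnit_det,
      isUnit_iff_ne_zero, not_not]
    have h2 : M.map Complex.ofReal - algebraMap ℂ (Matrix n n ℂ) (t : ℂ)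
        = Complex.ofRealHom.mapMatrix (M - t • (1 : Matrix n n ℝ)) := by
      ext i j
      by_cases hij : i = j
      · subst hij; simp [Matrix.algebraMap_matrix_apply]
      · simp [Matrix.algebraMap_matrix_apply, hij]
    rw [h2, ← RingHom.map_det, h, map_zero]
  have := hH _ hs
  simp at this
  linarith

lemma exists_small {n : Type*} [Finite n] (a b : n → ℝ) (ha : ∀ i, a i < 0) :
    ∃ e : ℝ, 0 < e ∧ ∀ i, a i + e * b i < 0 := by
  have h : ∀ᶠ e in nhdsWithin (0 : ℝ) (Set.Ioi 0), ∀ i, a i + e * b i < 0 := by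
    rw [Filter.eventually_all]
    intro i
    have hc : Continuous fun e : ℝ => a i + e * b i := by fun_prop
    have := hc.tendsto 0
    simp only [zero_mul, add_zero] at this
    exact (this.mono_left nhdsWithin_le_nhds).eventually_lt_const (ha i)
  obtain ⟨e, he, he0⟩ := (h.and self_mem_nhdsWithin).exists
  exact ⟨e, he0, he⟩

lemma hurwitz_cert {n : Type*} [Fintype n] [DecidableEq n] {M : Matrix n n ℝ}
    (hM : IsMetzler M) (hH : IsHurwitz M) : HasCert M := by
  let T : Set ℝ := {t | 0 ≤ t ∧ HasCert (M - t • (1 : Matrix n n ℝ))}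
  have hup : ∀ s ∈ T, ∀ t, s ≤ t → t ∈ T := by
    rintro s ⟨hs, v, hv, hMv⟩ t hst
    refine ⟨hs.trans hst, v, hv, fun i => ?_⟩
    have := hMv i
    rw [sub_smul_mulVec_apply] at this ⊢
    have := mul_le_mul_of_nonneg_right hst (hv i).le
    linarith
  have hne : T.Nonempty := by
    refine ⟨∑ i, |(M *ᵥ 1) i| + 1, by positivity, 1, fun i => one_pos, fun i => ?_⟩
    rw [sub_smul_mulVec_apply]
    have h1 := Finset.single_le_sum (f := fun i => |(M *ᵥ 1) i|) (fun i _ => abs_nonneg _)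
      (Finset.mem_univ i)
    have h2 := le_abs_self ((M *ᵥ 1) i)
    simp only [Pi.one_apply, mul_one] at *
    linarith
  have hbdd : BddBelow T := ⟨0, fun t ht => ht.1⟩
  set t0 := sInf T with ht0
  have ht0n : 0 ≤ t0 := le_csInf hne fun t ht => ht.1
  have hgt : ∀ t, t0 < t → t ∈ T := by
    intro t ht
    obtain ⟨s, hs, hst⟩ := exists_lt_of_csInf_lt hne ht
    exact hup s hs t hst.le
  let B : ℝ → Matrix n n ℝ := fun t => M - t • (1 : Matrix n n ℝ)
  have hB : Continuous B := by fun_prop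
  let x : ℝ → n → ℝ := fun t => (-(B t).det⁻¹) • ((B t).adjugate *ᵥ 1)
  have hBx : ∀ t, 0 ≤ t → B t *ᵥ x t = -1 := by
    intro t ht
    have := hurwitz_det hH t ht
    simp only [x]
    rw [Matrix.mulVec_smul, Matrix.mulVec_mulVec, Matrix.mul_adjugate, Matrix.smul_mulVec,
      Matrix.one_mulVec, smul_smul, neg_mul, inv_mul_cancel₀ this, neg_one_smul]
  have hxn : ∀ t, t0 < t → ∀ i, 0 ≤ x t i := by
    intro t ht i
    refine cert_nonneg (metzler_shift hM t) (hgt t ht).2 (x t) (fun j => ?_) i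
    have := congrFun (hBx t (ht0n.trans ht.le)) j
    simp only [B] at this
    rw [this]; simp
  have hx0 : ∀ i, 0 ≤ x t0 i := by
    intro i
    have hc : ContinuousAt (fun t => x t i) t0 := by
      have h1 : ContinuousAt (fun t => (B t).det) t0 := (hB.matrix_det).continuousAt
      have h2 : ContinuousAt (fun t => ((B t).adjugate *ᵥ (1 : n → ℝ)) i) t0 :=
        ((continuous_apply i).comp (hB.matrix_adjugate.matrix_mulVec continuous_const)).continuousAt
      exact ((h1.inv₀ (hurwitz_det hH t0 ht0n)).neg).mul h2
    have ht : Filter.Tendsto (fun t => x t i) (nhdsWithin t0 (Set.Ioi t0)) (nhds (x t0 i)) :=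
      hc.tendsto.mono_left nhdsWithin_le_nhds
    refine ge_of_tendsto ht ?_
    filter_upwards [self_mem_nhdsWithin] with t ht
    exact hxn t ht i
  have hB0 : ∀ i, (B t0 *ᵥ x t0) i = -1 := fun i => by rw [hBx t0 ht0n]; rfl
  have hxpos : ∀ i, 0 < x t0 i := by
    intro i
    refine lt_of_le_of_ne (hx0 i) fun h => ?_
    have := metzler_row_nonneg (metzler_shift hM t0) (x t0) hx0 i h.symm
    have h2 := hB0 i
    simp only [B] at h2
    linarith
  have hz : t0 = 0 := by
    by_contra hne0
    have hpos : 0 < t0 := lt_of_le_of_ne ht0n (Ne.symm hne0)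
    obtain ⟨e, he, hes⟩ := exists_small (fun i => (-1 : ℝ)) (x t0) (fun i => by norm_num)
    have hlt : max 0 (t0 - e) < t0 := max_lt hpos (by linarith)
    have hmem : max 0 (t0 - e) ∈ T := by
      refine ⟨le_max_left _ _, x t0, hxpos, fun i => ?_⟩
      have h1 := hB0 i
      simp only [B] at h1
      rw [sub_smul_mulVec_apply] at h1 ⊢
      have h2 := mul_le_mul_of_nonneg_right (le_max_right 0 (t0 - e)) (hxpos i).le
      have h3 := hes i
      linarith
    exact absurd (csInf_le hbdd hmem) (not_le.2 hlt)
  refine ⟨x t0, hxpos, fun i => ?_⟩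
  have h1 := hB0 i
  simp only [B] at h1
  rw [sub_smul_mulVec_apply, hz] at h1
  rw [hz]
  linarith

lemma mulVec_nonneg_aux {m n : Type*} [Fintype n] {M : Matrix m n ℝ}
    (hM : ∀ i j, 0 ≤ M i j) {x : n → ℝ} (hx : ∀ j, 0 ≤ x j) (i : m) : 0 ≤ (M *ᵥ x) i :=
  Finset.sum_nonneg fun j _ => mul_nonneg (hM i j) (hx j)

lemma schur_aux {m n : Type*} [Fintype m] [DecidableEq m] [Fintype n] [DecidableEq n]
    (A : Matrix m m ℝ) (B : Matrix m n ℝ) (C : Matrix n m ℝ) (D : Matrix n n ℝ)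
    (h : IsMetzler (Matrix.fromBlocks A B C D)) :
    IsHurwitz (Matrix.fromBlocks A B C D) ↔
      (IsUnit A.det ∧ IsHurwitz A ∧ IsMetzler A ∧
        IsHurwitz (D - C * A⁻¹ * B) ∧ IsMetzler (D - C * A⁻¹ * B)) := by
  have hA : IsMetzler A := fun i j hij => h (Sum.inl i) (Sum.inl j) (by simpa using hij)
  have hD : IsMetzler D := fun i j hij => h (Sum.inr i) (Sum.inr j) (by simpa using hij)
  have hB : ∀ i j, 0 ≤ B i j := fun i j => h (Sum.inl i) (Sum.inr j) (by simp)
  have hC : ∀ i j, 0 ≤ C i j := fun i j => h (Sum.inr i) (Sum.inl j) (by simp)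
  have hSv : ∀ w, (D - C * A⁻¹ * B) *ᵥ w = D *ᵥ w + C *ᵥ ((-A⁻¹) *ᵥ (B *ᵥ w)) := by
    intro w
    rw [Matrix.sub_mulVec, Matrix.neg_mulVec, Matrix.mulVec_neg, Matrix.mulVec_mulVec,
      Matrix.mulVec_mulVec, sub_eq_add_neg, Matrix.mul_assoc]
  constructor
  · intro hH
    obtain ⟨v, hv, hMv⟩ := hurwitz_cert h hH
    have e1 : ∀ i, (A *ᵥ (v ∘ Sum.inl)) i + (B *ᵥ (v ∘ Sum.inr)) i < 0 := fun i => by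
      simpa [Matrix.fromBlocks_mulVec] using hMv (Sum.inl i)
    have e2 : ∀ i, (C *ᵥ (v ∘ Sum.inl)) i + (D *ᵥ (v ∘ Sum.inr)) i < 0 := fun i => by
      simpa [Matrix.fromBlocks_mulVec] using hMv (Sum.inr i)
    have hcA : HasCert A := ⟨v ∘ Sum.inl, fun i => hv _, fun i => by
      have := mulVec_nonneg_aux hB (x := v ∘ Sum.inr) (fun j => (hv _).le) i
      linarith [e1 i]⟩
    have hu := cert_isUnit hA hcA
    have hinv : ∀ i j, 0 ≤ (-A⁻¹) i j := fun i j => by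
      simpa using cert_inv hA hcA i j
    have hS : IsMetzler (D - C * A⁻¹ * B) := by
      intro i j hij
      have h1 : 0 ≤ (C *ᵥ ((-A⁻¹) *ᵥ (B *ᵥ Pi.single j 1))) i := by
        refine mulVec_nonneg_aux hC (mulVec_nonneg_aux hinv (fun k => ?_)) i
        simpa using hB k j
      have h2 := congrFun (hSv (Pi.single j 1)) i
      rw [Pi.add_apply, Matrix.mulVec_single_one, Matrix.mulVec_single_one] at h2
      have h3 := hD i j hij
      simp only [Matrix.col_apply] at h2
      rw [h2]
      linarith
    refine ⟨hu, cert_hurwitz hA hcA, hA, cert_hurwitz hS ⟨v ∘ Sum.inr, fun i => hv _, ?_⟩, hS⟩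
    intro i
    rw [hSv]
    have h1 : ∀ k, 0 ≤ (v ∘ Sum.inl - (-A⁻¹) *ᵥ (B *ᵥ (v ∘ Sum.inr))) k := by
      refine cert_nonneg hA hcA _ fun k => ?_
      rw [Matrix.mulVec_sub, Matrix.mulVec_mulVec, Matrix.mul_neg, Matrix.mul_nonsing_inv _ hu,
        Matrix.neg_mulVec, Matrix.one_mulVec, sub_neg_eq_add]
      exact (e1 k).le
    have h2 := mulVec_nonneg_aux hC h1 i
    rw [Matrix.mulVec_sub, Pi.sub_apply] at h2
    rw [Pi.add_apply]
    linarith [e2 i]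
  · rintro ⟨hu, hHA, -, hHS, hS⟩
    have hcA := hurwitz_cert hA hHA
    have hinv : ∀ i j, 0 ≤ (-A⁻¹) i j := fun i j => by
      simpa using cert_inv hA hcA i j
    obtain ⟨u, hup, hAu⟩ := hcA
    obtain ⟨w, hw, hSw⟩ := hurwitz_cert hS hHS
    obtain ⟨e, he, hes⟩ := exists_small _ (C *ᵥ u) hSw
    refine cert_hurwitz h ⟨Sum.elim ((-A⁻¹) *ᵥ (B *ᵥ w) + e • u) w, ?_, ?_⟩
    · rintro (i | i)
      · have := mulVec_nonneg_aux hinv (mulVec_nonneg_aux hB (fun j => (hw j).le)) i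
        have := mul_pos he (hup i)
        simp only [Sum.elim_inl, Pi.add_apply, Pi.smul_apply, smul_eq_mul]
        linarith
      · exact hw i
    · rw [Matrix.fromBlocks_mulVec, Sum.elim_comp_inl, Sum.elim_comp_inr]
      rintro (i | i)
      · rw [Sum.elim_inl, Matrix.mulVec_add, Matrix.mulVec_mulVec, Matrix.mul_neg,
          Matrix.mul_nonsing_inv _ hu, Matrix.neg_mulVec, Matrix.one_mulVec, Matrix.mulVec_smul]
        have := mul_neg_of_pos_of_neg he (hAu i)
        simp only [Pi.add_apply, Pi.neg_apply, Pi.smul_apply, smul_eq_mul]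
        linarith
      · have := hes i
        rw [hSv] at this
        rw [Sum.elim_inr, Matrix.mulVec_add, Matrix.mulVec_smul]
        simp only [Pi.add_apply, Pi.smul_apply, smul_eq_mul] at this ⊢
        linarith

lemma swap_metzler {m n : Type*} [DecidableEq m] [DecidableEq n]
    (A : Matrix m m ℝ) (B : Matrix m n ℝ) (C : Matrix n m ℝ) (D : Matrix n n ℝ)
    (h : IsMetzler (Matrix.fromBlocks A B C D)) : IsMetzler (Matrix.fromBlocks D C B A) := by
  intro i j hij
  have := h i.swap j.swap (fun hh => hij (Sum.swap_leftInverse.injective hh))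
  rcases i with i | i <;> rcases j with j | j <;> simpa using this

lemma swap_hurwitz {m n : Type*} [Fintype m] [DecidableEq m] [Fintype n] [DecidableEq n]
    (A : Matrix m m ℝ) (B : Matrix m n ℝ) (C : Matrix n m ℝ) (D : Matrix n n ℝ)
    (h : IsMetzler (Matrix.fromBlocks A B C D)) (hH : IsHurwitz (Matrix.fromBlocks A B C D)) :
    IsHurwitz (Matrix.fromBlocks D C B A) := by
  obtain ⟨v, hv, hMv⟩ := hurwitz_cert h hH
  refine cert_hurwitz (swap_metzler _ _ _ _ h) ⟨v ∘ Sum.swap, fun i => hv _, ?_⟩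
  rintro (i | i)
  · have := hMv (Sum.inr i)
    rw [Matrix.fromBlocks_mulVec] at this ⊢
    rw [Sum.elim_inr, Pi.add_apply, add_comm] at this
    exact this
  · have := hMv (Sum.inl i)
    rw [Matrix.fromBlocks_mulVec] at this ⊢
    rw [Sum.elim_inl, Pi.add_apply, add_comm] at this
    exact this

/-- **Souza–Deaecto–Geromel / Narendra–Shorten.** Let
`A = [A₁₁, A₁₂; A₂₁, A₂₂]` be a Metzler matrix partitioned in blocks with
`A₁₁` and `A₂₂` square. Then `A` is Hurwitz iff `A₁₁` is an invertible Hurwitz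
Metzler matrix and its Schur complement `A₂₂ - A₂₁ A₁₁⁻¹ A₁₂` is a Hurwitz
Metzler matrix, iff `A₂₂` is an invertible Hurwitz Metzler matrix and its
Schur complement `A₁₁ - A₁₂ A₂₂⁻¹ A₂₁` is a Hurwitz Metzler matrix. -/
theorem metzler_hurwitz_schur_complement {p q : ℕ}
    (A₁₁ : Matrix (Fin p) (Fin p) ℝ) (A₁₂ : Matrix (Fin p) (Fin q) ℝ)
    (A₂₁ : Matrix (Fin q) (Fin p) ℝ) (A₂₂ : Matrix (Fin q) (Fin q) ℝ)
    (hMetzler : IsMetzler (Matrix.fromBlocks A₁₁ A₁₂ A₂₁ A₂₂)) :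
    (IsHurwitz (Matrix.fromBlocks A₁₁ A₁₂ A₂₁ A₂₂) ↔
      (IsUnit A₁₁.det ∧ IsHurwitz A₁₁ ∧ IsMetzler A₁₁ ∧
        IsHurwitz (A₂₂ - A₂₁ * A₁₁⁻¹ * A₁₂) ∧ IsMetzler (A₂₂ - A₂₁ * A₁₁⁻¹ * A₁₂))) ∧
    (IsHurwitz (Matrix.fromBlocks A₁₁ A₁₂ A₂₁ A₂₂) ↔
      (IsUnit A₂₂.det ∧ IsHurwitz A₂₂ ∧ IsMetzler A₂₂ ∧
        IsHurwitz (A₁₁ - A₁₂ * A₂₂⁻¹ * A₂₁) ∧ IsMetzler (A₁₁ - A₁₂ * A₂₂⁻¹ * A₂₁))) := by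
  refine ⟨schur_aux _ _ _ _ hMetzler, ?_⟩
  rw [← schur_aux A₂₂ A₂₁ A₁₂ A₁₁ (swap_metzler _ _ _ _ hMetzler)]
  exact ⟨swap_hurwitz _ _ _ _ hMetzler,
    swap_hurwitz _ _ _ _ (swap_metzler _ _ _ _ hMetzler)⟩
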